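/- arXiv:2312.15232 — 3 statements merged into one kernel-verified Lean document; each statement's English description precedes it below -/
import Mathlib

section
/- Let $R > 0$, $M > 0$, and define $u_0(z) = -\frac{2M}{\pi} \arg\left( \frac{R-z}{R+z} \right)$ for $z \in B^2(0,R)$, where $\arg$ denotes the principal argument. Then $u_0$ is a real-valued harmonic function on $B^2(0,R)$ with $|u_0(z)| \leq M$ for all $z \in B^2(0,R)$, $u_0(0) = 0$, and for every $r$ with $0 < r < R$, $u_0(i r) = \frac{2M}{\pi} \arctan\left( \frac{2rR}{R^2-r^2} \right)$; that is, equality holds in the harmonic Schwarz lemma estimate $\left| u(a+z) - \frac{R^2-|z|^2}{R^2+|z|^2} u(a) \right| \leq \frac{2M}{\pi}\arctan\left(\frac{2R|z|}{R^2-|z|^2}\right)$ with $a = 0$ and $z = ir$. -/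
open Metric Set

/-- A real-valued function `u` on a subset of `ℂ ≅ ℝ²` is harmonic if it is twice
continuously differentiable and satisfies the Laplace equation
`∂²u/∂x² + ∂²u/∂y² = 0`. -/
def IsHarmonicOn (u : ℂ → ℝ) (G : Set ℂ) : Prop :=
  ContDiffOn ℝ 2 u G ∧ ∀ z ∈ G,
    iteratedFDeriv ℝ 2 u z ![1, 1] + iteratedFDeriv ℝ 2 u z ![Complex.I, Complex.I] = 0

/-- The extremal function `u₀(z) = -(2M/π) arg((R-z)/(R+z))` of the harmonic Schwarz
lemma, where `arg` is the principal argument. -/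
noncomputable def u₀ (R M : ℝ) (z : ℂ) : ℝ :=
  -(2 * M / Real.pi) * Complex.arg ((R - z) / (R + z))

lemma aux_pos (R : ℝ) (hR : 0 < R) (z : ℂ) (hz : z ∈ ball (0 : ℂ) R) :
    (R + z : ℂ) ≠ 0 ∧ 0 < ((R - z) / (R + z) : ℂ).re := by
  have hz' : ‖z‖ < R := by simpa using hz
  have h1 : |z.re| < R := lt_of_le_of_lt (Complex.abs_re_le_norm z) hz'
  have hne : (R + z : ℂ) ≠ 0 := by
    intro h
    have := congrArg Complex.re h
    simp at this
    linarith [(abs_lt.1 h1).1]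
  refine ⟨hne, ?_⟩
  have hn : 0 < Complex.normSq (R + z) := Complex.normSq_pos.2 hne
  have h2 : z.re * z.re + z.im * z.im < R ^ 2 := by
    rw [← Complex.normSq_apply, Complex.normSq_eq_norm_sq]
    exact pow_lt_pow_left₀ hz' (norm_nonneg _) (by norm_num)
  rw [Complex.div_re, ← add_div]
  apply div_pos _ hn
  simp
  nlinarith

theorem stmt_11 (R M : ℝ) (hR : 0 < R) (hM : 0 < M) :
    IsHarmonicOn (u₀ R M) (ball (0 : ℂ) R) ∧
    (∀ z ∈ ball (0 : ℂ) R, |u₀ R M z| ≤ M) ∧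
    u₀ R M 0 = 0 ∧
    ∀ r : ℝ, 0 < r → r < R →
      u₀ R M (Complex.I * r) = 2 * M / Real.pi * Real.arctan (2 * r * R / (R ^ 2 - r ^ 2)) := by
  have hpi := Real.pi_pos
  refine ⟨?_, ?_, ?_, ?_⟩
  · have key : InnerProductSpace.HarmonicOnNhd (u₀ R M) (ball (0 : ℂ) R) := by
      intro z hz
      obtain ⟨hne, hpos⟩ := aux_pos R hR z hz
      have ha : AnalyticAt ℂ (fun w : ℂ => Complex.log ((R - w) / (R + w))) z := by
        apply AnalyticAt.clog
        · exact (analyticAt_const.sub analyticAt_id).div (analyticAt_const.add analyticAt_id) hne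
        · exact Or.inl hpos
      have := (ha.harmonicAt_im).const_smul (c := -(2 * M / Real.pi))
      convert this using 1
      ext w
      simp [u₀, Complex.log_im]
    refine ⟨key.contDiffOn, fun z hz => ?_⟩
    have := (key z hz).2.self_of_nhds
    rwa [InnerProductSpace.laplacian_eq_iteratedFDeriv_complexPlane] at this
  · intro z hz
    obtain ⟨hne, hpos⟩ := aux_pos R hR z hz
    have h := Complex.abs_arg_le_pi_div_two_iff.2 hpos.le
    rw [u₀, abs_mul, abs_neg, abs_of_pos (by positivity)]
    calc _ ≤ 2 * M / Real.pi * (Real.pi / 2) := by gcongr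
      _ = M := by field_simp
  · have : (R : ℂ) ≠ 0 := by exact_mod_cast hR.ne'
    simp [u₀, this]
  · intro r hr hrR
    have hz : Complex.I * r ∈ ball (0 : ℂ) R := by simpa [abs_of_pos hr] using hrR
    obtain ⟨hne, hpos⟩ := aux_pos R hR _ hz
    have h := abs_lt.1 (Complex.abs_arg_lt_pi_div_two_iff.2 (Or.inl hpos))
    have hd : 0 < R ^ 2 - r ^ 2 := by nlinarith
    have hs : 0 < R ^ 2 + r ^ 2 := by positivity
    rw [u₀, ← Real.arctan_tan h.1 h.2, Complex.tan_arg, neg_mul, ← mul_neg, ← Real.arctan_neg]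
    congr 2
    have e : ((R - Complex.I * r) / (R + Complex.I * r) : ℂ) =
       ((R ^ 2 - r ^ 2) / (R ^ 2 + r ^ 2) : ℝ) + ((-(2 * r * R) / (R ^ 2 + r ^ 2) : ℝ) : ℂ) * Complex.I := by
      have hs' : (R ^ 2 + r ^ 2 : ℂ) ≠ 0 := by exact_mod_cast hs.ne'
      rw [div_eq_iff hne]
      push_cast
      field_simp
      ring_nf
      simp only [Complex.I_sq]
      ring
    rw [e]
    simp only [Complex.add_re, Complex.add_im, Complex.ofReal_re, Complex.ofReal_im, Complex.re_ofReal_mul, Complex.im_ofReal_mul, Complex.I_re, Complex.I_im]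
    have hd' := hd.ne'
    have hs' := hs.ne'
    rw [mul_zero, mul_one, add_zero, zero_add, div_div_div_cancel_right₀ hs', neg_div, neg_neg]
end

section
/- Let $\alpha < \beta$ be real numbers and let $u : \mathbb{B}^2 \to (\alpha, \beta)$ be a real-valued harmonic function on the unit disk. Then for every $z \in \mathbb{B}^2$, $|\nabla u(z)| \leq \frac{2(\beta-\alpha)}{\pi} \cdot \frac{1 - \frac{4}{(\beta-\alpha)^2}\left| u(z) - \frac{\alpha+\beta}{2} \right|^2}{1 - |z|^2}$. -/
open Metric Set

lemma aux_cos (x : ℝ) (hx : |x| ≤ 1) : Real.cos (Real.pi * x / 2) ≤ 1 - x ^ 2 := by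
  have hpi := Real.pi_pos
  wlog h0 : 0 ≤ x generalizing x with H
  · have := H (-x) (by simpa using hx) (by linarith)
    rw [show Real.pi * -x / 2 = -(Real.pi * x / 2) by ring, Real.cos_neg] at this
    simpa using this
  have h1 : x ≤ 1 := (le_abs_self x).trans hx
  have hc := strictConcaveOn_sin_Icc.concaveOn.2 (x := 0) (y := Real.pi / 4)
    ⟨le_rfl, hpi.le⟩ ⟨by positivity, by linarith⟩ (sub_nonneg.2 h1) h0 (by ring)
  simp only [smul_eq_mul, Real.sin_zero, mul_zero, zero_add, Real.sin_pi_div_four] at hc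
  have hs : (Real.sqrt 2) ^ 2 = 2 := Real.sq_sqrt (by norm_num)
  have hcos : Real.cos (Real.pi * x / 2) = 1 - 2 * Real.sin (x * (Real.pi / 4)) ^ 2 := by
    rw [show Real.pi * x / 2 = 2 * (x * (Real.pi / 4)) by ring, Real.cos_two_mul, Real.cos_sq']
    ring
  have h2 : (x * (Real.sqrt 2 / 2)) ^ 2 ≤ Real.sin (x * (Real.pi / 4)) ^ 2 := by
    gcongr
  rw [hcos]
  nlinarith

lemma aux_mob (z w : ℂ) (hz : ‖z‖ < 1) (hw : ‖w‖ < 1) :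
    1 + (starRingEnd ℂ) z * w ≠ 0 ∧ ‖(w + z) / (1 + (starRingEnd ℂ) z * w)‖ < 1 := by
  have h1 : 1 + (starRingEnd ℂ) z * w ≠ 0 := by
    intro h
    have : (starRingEnd ℂ) z * w = -1 := by linear_combination h
    have h2 := congrArg norm this
    rw [norm_mul, RCLike.norm_conj, norm_neg, norm_one] at h2
    nlinarith [norm_nonneg z, norm_nonneg w]
  refine ⟨h1, ?_⟩
  rw [norm_div, div_lt_one (norm_pos_iff.2 h1)]
  refine lt_of_pow_lt_pow_left₀ 2 (norm_nonneg _) ?_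
  have e1 : ‖z‖ ^ 2 < 1 := by nlinarith [norm_nonneg z]
  have e2 : ‖w‖ ^ 2 < 1 := by nlinarith [norm_nonneg w]
  rw [← Complex.normSq_eq_norm_sq, Complex.normSq_apply] at e1 e2 ⊢
  rw [← Complex.normSq_eq_norm_sq, Complex.normSq_apply]
  simp only [Complex.add_re, Complex.add_im, Complex.mul_re, Complex.mul_im, Complex.conj_re,
    Complex.conj_im, Complex.one_re, Complex.one_im]
  nlinarith [mul_pos (sub_pos.2 e1) (sub_pos.2 e2)]

lemma aux_half (a b : ℂ) (ha : 0 < a.re) (hb : 0 < b.re) :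
    b + (starRingEnd ℂ) a ≠ 0 ∧ ‖(b - a) / (b + (starRingEnd ℂ) a)‖ ≤ 1 := by
  have h1 : b + (starRingEnd ℂ) a ≠ 0 := by
    intro h
    have := congrArg Complex.re h
    simp at this
    linarith
  refine ⟨h1, ?_⟩
  rw [norm_div, div_le_one (norm_pos_iff.2 h1)]
  refine le_of_sq_le_sq ?_ (norm_nonneg _)
  rw [← Complex.normSq_eq_norm_sq, ← Complex.normSq_eq_norm_sq, Complex.normSq_apply,
    Complex.normSq_apply]
  simp only [Complex.add_re, Complex.add_im, Complex.sub_re, Complex.sub_im, Complex.conj_re,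
    Complex.conj_im]
  nlinarith [mul_pos ha hb]

lemma aux_pick (g : ℂ → ℂ) (hg : DifferentiableOn ℂ g (ball 0 1))
    (hpos : ∀ w ∈ ball (0 : ℂ) 1, 0 < (g w).re) (z : ℂ) (hz : z ∈ ball (0 : ℂ) 1) :
    ‖deriv g z‖ * (1 - ‖z‖ ^ 2) ≤ 2 * (g z).re := by
  have hz' : ‖z‖ < 1 := by simpa using hz
  set m : ℂ → ℂ := fun w => (w + z) / (1 + (starRingEnd ℂ) z * w) with hm
  have hmb : ∀ w ∈ ball (0 : ℂ) 1, m w ∈ ball (0 : ℂ) 1 := fun w hw => by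
    simpa [hm] using (aux_mob z w hz' (by simpa using hw)).2
  have hm0 : m 0 = z := by simp [hm]
  have hmd : ∀ w ∈ ball (0 : ℂ) 1, DifferentiableAt ℂ m w := fun w hw => by
    have := (aux_mob z w hz' (by simpa using hw)).1
    exact DifferentiableAt.div (by fun_prop) (by fun_prop) this
  have hm' : HasDerivAt m (1 - z * (starRingEnd ℂ) z) 0 := by
    have h := ((hasDerivAt_id (0 : ℂ)).add_const z).div
      (((hasDerivAt_id (0 : ℂ)).const_mul ((starRingEnd ℂ) z)).const_add 1) (by simp)
    refine HasDerivAt.congr_deriv (f := m) h ?_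
    simp
  have hgd : ∀ w ∈ ball (0 : ℂ) 1, DifferentiableAt ℂ g w := fun w hw =>
    hg.differentiableAt (isOpen_ball.mem_nhds hw)
  set a := g z with ha
  set φ : ℂ → ℂ := fun w => (g (m w) - a) / (g (m w) + (starRingEnd ℂ) a) with hφ
  have hφd : DifferentiableOn ℂ φ (ball 0 1) := fun w hw => by
    have h1 : DifferentiableAt ℂ (fun w => g (m w)) w :=
      (hgd _ (hmb w hw)).comp w (hmd w hw)
    exact (DifferentiableAt.div (h1.sub_const _) (h1.add_const _)
      (aux_half a _ (hpos z hz) (hpos _ (hmb w hw))).1).differentiableWithinAt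
  have hφ0 : φ 0 = 0 := by simp [hφ, hm0, ha]
  have hφm : MapsTo φ (ball 0 1) (closedBall (φ 0) 1) := fun w hw => by
    rw [hφ0]
    simpa [hφ] using (aux_half a _ (hpos z hz) (hpos _ (hmb w hw))).2
  have hle := Complex.norm_deriv_le_div_of_mapsTo_ball hφd hφm one_pos
  have hG : HasDerivAt (fun w => g (m w)) (deriv g z * (1 - z * (starRingEnd ℂ) z)) 0 := by
    have h1 : HasDerivAt g (deriv g z) (m 0) := by rw [hm0]; exact (hgd z hz).hasDerivAt
    exact h1.comp 0 hm'
  have hne := (aux_half a a (hpos z hz) (hpos z hz)).1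
  have hφ' : HasDerivAt φ (deriv g z * (1 - z * (starRingEnd ℂ) z) / (a + (starRingEnd ℂ) a)) 0 := by
    have h := (hG.sub_const a).div (hG.add_const ((starRingEnd ℂ) a)) (by simpa [hm0] using hne)
    refine HasDerivAt.congr_deriv (f := φ) h ?_
    simp only [hm0, ← ha]
    field_simp
    ring
  rw [hφ'.deriv, norm_div, norm_mul, Complex.mul_conj, Complex.add_conj,
    Complex.normSq_eq_norm_sq] at hle
  have e1 : ‖(1 : ℂ) - ((‖z‖ ^ 2 : ℝ) : ℂ)‖ = 1 - ‖z‖ ^ 2 := by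
    rw [← Complex.ofReal_one, ← Complex.ofReal_sub, Complex.norm_real, Real.norm_of_nonneg]
    nlinarith [norm_nonneg z]
  have hp := hpos z hz
  rw [e1, Complex.norm_real, Real.norm_of_nonneg (by positivity), div_one,
    div_le_one (by positivity)] at hle
  exact hle

/-- Schwarz–Pick type gradient estimate: if `u : 𝔹² → (α, β)` is a real-valued harmonic
function on the unit disk, then for every `z ∈ 𝔹²`,
`|∇u(z)| ≤ (2(β-α)/π) · (1 - (4/(β-α)²)|u(z)-(α+β)/2|²)/(1-|z|²)`.
Here `|∇u(z)|` is the (operator, equivalently Euclidean) norm of the derivative of `u`. -/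
theorem stmt_12 (α β : ℝ) (hαβ : α < β) (u : ℂ → ℝ)
    (hu : IsHarmonicOn u (ball (0 : ℂ) 1))
    (hrange : ∀ z ∈ ball (0 : ℂ) 1, u z ∈ Ioo α β)
    (z : ℂ) (hz : z ∈ ball (0 : ℂ) 1) :
    ‖fderiv ℝ u z‖ ≤ 2 * (β - α) / Real.pi *
      ((1 - 4 / (β - α) ^ 2 * |u z - (α + β) / 2| ^ 2) / (1 - ‖z‖ ^ 2)) := by
  have hpi := Real.pi_pos
  have hd : 0 < β - α := sub_pos.2 hαβ
  have hharm : InnerProductSpace.HarmonicOnNhd u (ball (0 : ℂ) 1) := by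
    intro x hx
    refine ⟨hu.1.contDiffAt (isOpen_ball.mem_nhds hx), ?_⟩
    filter_upwards [isOpen_ball.mem_nhds hx] with y hy
    rw [InnerProductSpace.laplacian_eq_iteratedFDeriv_complexPlane]
    exact hu.2 y hy
  obtain ⟨F, hF, hFu⟩ := hharm.exists_analyticOnNhd_ball_re_eq
  have hre : ∀ w ∈ ball (0 : ℂ) 1, (F w).re = u w := fun w hw => hFu hw
  set k : ℝ := Real.pi / (β - α) with hk
  have hkpos : 0 < k := by positivity
  set c : ℝ := (α + β) / 2 with hc
  set g : ℂ → ℂ := fun w => Complex.exp (Complex.I * k * (F w - c)) with hg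
  have hgr : ∀ w ∈ ball (0 : ℂ) 1,
      (g w).re = ‖g w‖ * Real.cos (k * (u w - c)) := fun w hw => by
    simp only [hg]
    rw [Complex.exp_re, Complex.norm_exp]
    congr 2
    simp [hre w hw]
  have hgd : ∀ w ∈ ball (0 : ℂ) 1,
      HasDerivAt g (g w * (Complex.I * k * deriv F w)) w := fun w hw =>
    (((hF w hw).differentiableAt.hasDerivAt.sub_const (c : ℂ)).const_mul (Complex.I * k)).cexp
  have hgpos : ∀ w ∈ ball (0 : ℂ) 1, 0 < (g w).re := fun w hw => by
    rw [hgr w hw]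
    obtain ⟨h1, h2⟩ := hrange w hw
    have hkd : k * (β - α) = Real.pi := by rw [hk]; field_simp
    refine mul_pos (norm_pos_iff.2 (Complex.exp_ne_zero _)) (Real.cos_pos_of_mem_Ioo ⟨?_, ?_⟩)
    · rw [hc]; nlinarith [mul_pos hkpos (sub_pos.2 h1)]
    · rw [hc]; nlinarith [mul_pos hkpos (sub_pos.2 h2)]
  have hpick := aux_pick g (fun w hw => (hgd w hw).differentiableAt.differentiableWithinAt)
    hgpos z hz
  have hgz : 0 < ‖g z‖ := norm_pos_iff.2 (Complex.exp_ne_zero _)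
  rw [(hgd z hz).deriv, hgr z hz, norm_mul, norm_mul, norm_mul, Complex.norm_I, one_mul,
    Complex.norm_real, Real.norm_of_nonneg hkpos.le] at hpick
  have hpick2 : k * ‖deriv F z‖ * (1 - ‖z‖ ^ 2) ≤ 2 * Real.cos (k * (u z - c)) := by
    refine le_of_mul_le_mul_left ?_ hgz
    linarith
  have hz' : ‖z‖ < 1 := by simpa using hz
  have hzp : 0 < 1 - ‖z‖ ^ 2 := by nlinarith [norm_nonneg z]
  have hcos := aux_cos (2 * (u z - c) / (β - α)) (by
    obtain ⟨h1, h2⟩ := hrange z hz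
    rw [abs_div, abs_of_pos hd, div_le_one hd, abs_le]
    constructor <;> rw [hc] <;> linarith)
  rw [show Real.pi * (2 * (u z - c) / (β - α)) / 2 = k * (u z - c) by rw [hk]; field_simp] at hcos
  have hfd : HasFDerivAt u (Complex.reCLM.comp
      ((fderiv ℂ F z).restrictScalars ℝ)) z := by
    have h1 := Complex.reCLM.hasFDerivAt.comp z
      ((hF z hz).differentiableAt.hasFDerivAt.restrictScalars ℝ)
    refine h1.congr_of_eventuallyEq ?_
    filter_upwards [isOpen_ball.mem_nhds hz] with y hy
    simp [hre y hy]
  have hn : ‖fderiv ℝ u z‖ ≤ ‖deriv F z‖ := by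
    rw [hfd.fderiv]
    refine ContinuousLinearMap.opNorm_le_bound _ (norm_nonneg _) fun h => ?_
    rw [norm_deriv_eq_norm_fderiv]
    exact (Complex.abs_re_le_norm _).trans ((fderiv ℂ F z).le_opNorm h)
  refine hn.trans ?_
  rw [mul_div_assoc', le_div_iff₀ hzp, sq_abs]
  have e : 4 / (β - α) ^ 2 * (u z - c) ^ 2 = (2 * (u z - c) / (β - α)) ^ 2 := by
    field_simp; ring
  rw [e, show 2 * (β - α) / Real.pi = 2 / k by rw [hk]; field_simp, div_mul_eq_mul_div,
    le_div_iff₀ hkpos]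
  linarith
end

section
/- Let $\alpha < \beta$ be real numbers and define $\ell(z) = \frac{\alpha+\beta}{2} + \frac{\beta-\alpha}{\pi} \arctan\left( \frac{2y}{1-x^2-y^2} \right)$ for $z = (x,y) \in \mathbb{B}^2$. Then $\ell$ is harmonic on the unit disk $\mathbb{B}^2$, satisfies $\alpha < \ell(z) < \beta$ for all $z \in \mathbb{B}^2$, and $|\nabla \ell(0)| = \frac{2(\beta-\alpha)}{\pi}$; in particular $\ell$ attains equality at $z = 0$ in the sharp gradient estimate $|\nabla u(z)| \leq \frac{2(\beta-\alpha)}{\pi} \cdot \frac{1 - \frac{4}{(\beta-\alpha)^2}|u(z)-\frac{\alpha+\beta}{2}|^2}{1-|z|^2}$. -/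
open Metric Set

/-- The extremal function `ℓ(z) = (α+β)/2 + ((β-α)/π) arctan(2y/(1-x²-y²))`, `z = x + iy`. -/
noncomputable def ell (α β : ℝ) (z : ℂ) : ℝ :=
  (α + β) / 2 + (β - α) / Real.pi * Real.arctan (2 * z.im / (1 - z.re ^ 2 - z.im ^ 2))

noncomputable def ellF (α β : ℝ) (z : ℂ) : ℂ :=
  ((α + β) / 2 : ℝ) * Complex.I + ((β - α) / Real.pi : ℝ) * Complex.log ((1 + z) / (1 - z))

theorem ell_aux (z : ℂ) (hz : z ∈ ball (0 : ℂ) 1) :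
    0 < 1 - z.re ^ 2 - z.im ^ 2 ∧ 1 - z ≠ 0 ∧ 0 < ((1 + z) / (1 - z)).re ∧
    ((1 + z) / (1 - z)).im / ((1 + z) / (1 - z)).re = 2 * z.im / (1 - z.re ^ 2 - z.im ^ 2) := by
  have h1 : 0 < 1 - z.re ^ 2 - z.im ^ 2 := by
    have h : ‖z‖ < 1 := by simpa using hz
    have h2 : ‖z‖ ^ 2 < 1 := by nlinarith [norm_nonneg z]
    rw [← Complex.normSq_eq_norm_sq, Complex.normSq_apply] at h2
    nlinarith
  have h2 : 1 - z ≠ 0 := by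
    intro h
    have : z = 1 := by linear_combination -h
    subst this
    norm_num at h1
  have h3 : 0 < Complex.normSq (1 - z) := Complex.normSq_pos.2 h2
  have hre : ((1 + z) / (1 - z)).re = (1 - z.re ^ 2 - z.im ^ 2) / Complex.normSq (1 - z) := by
    rw [Complex.div_re]; simp; field_simp; ring
  have him : ((1 + z) / (1 - z)).im = 2 * z.im / Complex.normSq (1 - z) := by
    rw [Complex.div_im]; simp; field_simp; ring
  refine ⟨h1, h2, ?_, ?_⟩
  · rw [hre]; positivity
  · rw [hre, him]; field_simp

theorem ell_eq (α β : ℝ) (z : ℂ) (hz : z ∈ ball (0 : ℂ) 1) :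
    ell α β z = (ellF α β z).im := by
  obtain ⟨h1, h2, h3, h4⟩ := ell_aux z hz
  have h5 := abs_lt.1 (Complex.abs_arg_lt_pi_div_two_iff.2 (Or.inl h3))
  unfold ell ellF
  rw [← h4, ← Complex.tan_arg, Real.arctan_tan h5.1 h5.2]
  simp only [Complex.add_im, Complex.im_ofReal_mul, Complex.I_im,
    Complex.log_im, mul_one]

theorem ellF_diff (α β : ℝ) (z : ℂ) (hz : z ∈ ball (0 : ℂ) 1) :
    AnalyticAt ℂ (ellF α β) z := by
  obtain ⟨h1, h2, h3, h4⟩ := ell_aux z hz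
  unfold ellF
  have : AnalyticAt ℂ (fun z : ℂ => (1 + z) / (1 - z)) z :=
    (analyticAt_const.add analyticAt_id).div (analyticAt_const.sub analyticAt_id) h2
  exact analyticAt_const.add (analyticAt_const.mul (this.clog (Or.inl h3)))

theorem ell_ev (α β : ℝ) (z : ℂ) (hz : z ∈ ball (0 : ℂ) 1) :
    ell α β =ᶠ[nhds z] fun w => (ellF α β w).im := by
  filter_upwards [isOpen_ball.mem_nhds hz] with w hw using ell_eq α β w hw

theorem ell_harm (α β : ℝ) (z : ℂ) (hz : z ∈ ball (0 : ℂ) 1) :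
    InnerProductSpace.HarmonicAt (ell α β) z :=
  (InnerProductSpace.harmonicAt_congr_nhds (ell_ev α β z hz)).2 (ellF_diff α β z hz).harmonicAt_im

theorem ell_norm (α β : ℝ) (hαβ : α < β) :
    ‖fderiv ℝ (ell α β) 0‖ = 2 * (β - α) / Real.pi := by
  have h0 : (0 : ℂ) ∈ ball (0 : ℂ) 1 := by simp
  have hd : HasDerivAt (ellF α β) (((2 * (β - α) / Real.pi : ℝ)) : ℂ) 0 := by
    unfold ellF
    have h : HasDerivAt (fun z : ℂ => (1 + z) / (1 - z)) 2 0 := by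
      have := ((hasDerivAt_id (0 : ℂ)).const_add 1).div ((hasDerivAt_id (0 : ℂ)).const_sub 1)
        (by simp)
      have e : (1 * (1 - id (0 : ℂ)) - (1 + id 0) * -1) / (1 - id 0) ^ 2 = 2 := by
        norm_num
      rw [e] at this
      exact this
    have := ((h.clog (by simp)).const_mul (((β - α) / Real.pi : ℝ) : ℂ)).const_add
      ((((α + β) / 2 : ℝ) : ℂ) * Complex.I)
    have e : (((β - α) / Real.pi : ℝ) : ℂ) * (2 / ((1 + 0) / (1 - 0))) =
        ((2 * (β - α) / Real.pi : ℝ) : ℂ) := by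
      push_cast
      norm_num
      ring
    rw [e] at this
    exact this
  have hf := (Complex.imCLM.hasFDerivAt.comp (0 : ℂ) (hd.hasFDerivAt.restrictScalars ℝ))
  have hf2 := hf.congr_of_eventuallyEq (ell_ev α β 0 h0)
  rw [hf2.fderiv]
  have : (Complex.imCLM.comp ((ContinuousLinearMap.toSpanSingleton ℂ
      (((2 * (β - α) / Real.pi : ℝ)) : ℂ)).restrictScalars ℝ)) =
      (2 * (β - α) / Real.pi : ℝ) • Complex.imCLM := by
    ext w
    simp only [ContinuousLinearMap.comp_apply, ContinuousLinearMap.coe_restrictScalars',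
      ContinuousLinearMap.toSpanSingleton_apply, smul_eq_mul, Complex.imCLM_apply,
      Complex.im_mul_ofReal, smul_apply]
    ring
  have hp : 0 ≤ 2 * (β - α) / Real.pi :=
    div_nonneg (by linarith) Real.pi_pos.le
  erw [this]
  rw [norm_smul, Complex.imCLM_norm, mul_one, Real.norm_of_nonneg hp]

/-- The function `ℓ` is harmonic on the unit disk, takes values in `(α, β)`, and satisfies
`|∇ℓ(0)| = 2(β-α)/π`; in particular it attains equality at `z = 0` in the sharp gradient
estimate `|∇u(z)| ≤ (2(β-α)/π)(1-(4/(β-α)²)|u(z)-(α+β)/2|²)/(1-|z|²)`. -/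
theorem stmt_13 (α β : ℝ) (hαβ : α < β) :
    IsHarmonicOn (ell α β) (ball (0 : ℂ) 1) ∧
    (∀ z ∈ ball (0 : ℂ) 1, α < ell α β z ∧ ell α β z < β) ∧
    ‖fderiv ℝ (ell α β) 0‖ = 2 * (β - α) / Real.pi ∧
    ‖fderiv ℝ (ell α β) 0‖ = 2 * (β - α) / Real.pi *
      ((1 - 4 / (β - α) ^ 2 * |ell α β 0 - (α + β) / 2| ^ 2) / (1 - ‖(0 : ℂ)‖ ^ 2)) := by
  refine ⟨⟨fun z hz => (ell_harm α β z hz).1.contDiffWithinAt, fun z hz => ?_⟩, fun z hz => ?_,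
    ell_norm α β hαβ, ?_⟩
  · have := (ell_harm α β z hz).2.eq_of_nhds
    rwa [InnerProductSpace.laplacian_eq_iteratedFDeriv_complexPlane] at this
  · unfold ell
    set t := 2 * z.im / (1 - z.re ^ 2 - z.im ^ 2)
    have h1 := Real.arctan_lt_pi_div_two t
    have h2 := Real.neg_pi_div_two_lt_arctan t
    have hp := Real.pi_pos
    have hc : 0 < (β - α) / Real.pi := div_pos (by linarith) hp
    have e : (β - α) / Real.pi * (Real.pi / 2) = (β - α) / 2 := by field_simp
    constructor
    · have := mul_lt_mul_of_pos_left h2 hc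
      linarith
    · have := mul_lt_mul_of_pos_left h1 hc
      linarith
  · rw [ell_norm α β hαβ]
    simp [ell]
end
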